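/- Assume k ≥ 1. For every q ∈ ℕ, there exist BPCC configurations C_1,…,C_q with C_1 ∪ … ∪ C_q = V if and only if there exist CT configurations D_1,…,D_q of the reduced instance whose union is the entire vertex set {r} ∪ {r_1,…,r_m} ∪ {ℓ_v : v ∈ V} of H. -/

import Mathlib

/-!
Write `X(C) = {r} ∪ {r_i : C ∩ V_i ≠ ∅} ∪ {ℓ_v : v ∈ C}`; its size is `2k · p + w(C)`, where `p` is
the number of parts met by `C`. An independent set meets at most one part, so `X(C)` has size at
most `3k` when `C` is a BPCC configuration; and `X(C)` is closed under precedence by construction.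
Conversely, if `D` is a CT configuration and `C = {v : ℓ_v ∈ D}`, closure gives
`{r_i : C ∩ V_i ≠ ∅} ∪ {ℓ_v : v ∈ C} ⊆ D`, hence `2k · p + w(C) ≤ 3k`. As `k ≥ 1`, this forces
`p ≤ 1`, so `C` is independent; and if `C` is nonempty then `p = 1` and `w(C) ≤ k`.
Both translations preserve coverings.
-/

open Finset

/-- Vertices of the reduced CT instance: the root `none`, the vertices `r_i`
(`some (Sum.inl i)`), and the leaves `ℓ_v` (`some (Sum.inr v)`). -/
abbrev CTVert (V : Type*) (m : ℕ) := Option (Fin m ⊕ V)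

/-- Sizes in the reduced CT instance: `s(r) = 0`, `s(r_i) = 2k`, `s(ℓ_v) = w v`. -/
def ctSize {V : Type*} {m : ℕ} (w : V → ℕ) (k : ℕ) : CTVert V m → ℕ
  | none => 0
  | some (Sum.inl _) => 2 * k
  | some (Sum.inr v) => w v

/-- Edges of the reduced out-tree `H`: `(r, r_i)` for each `i`, and
`(r_i, ℓ_v)` whenever `v` lies in part `V_i` (i.e. `P v = i`). -/
def ctEdge {V : Type*} {m : ℕ} (P : V → Fin m) : CTVert V m → CTVert V m → Prop :=
  fun z u =>
    (z = none ∧ ∃ i : Fin m, u = some (Sum.inl i)) ∨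
    (∃ v : V, z = some (Sum.inl (P v)) ∧ u = some (Sum.inr v))

/-- The CT configuration `X(C)` attached to a set `C` of vertices. -/
def ctX {V : Type*} {m : ℕ} (P : V → Fin m) (C : Finset V) : Finset (CTVert V m) :=
  insertNone ((C.image P).disjSum C)

lemma sum_ctSize_ctX {V : Type*} {m : ℕ} (P : V → Fin m) (w : V → ℕ) (k : ℕ) (C : Finset V) :
    ∑ u ∈ ctX P C, ctSize w k u = (C.image P).card * (2 * k) + ∑ v ∈ C, w v := by
  simp [ctX, Finset.sum_disjSum, ctSize]

lemma ctX_closed {V : Type*} {m : ℕ} (P : V → Fin m) (C : Finset V) :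
    ∀ u ∈ ctX P C, ∀ z : CTVert V m, ctEdge P z u → z ∈ ctX P C := by
  rintro u hu z (⟨rfl, -⟩ | ⟨v, rfl, rfl⟩)
  · simp [ctX]
  · have hv : v ∈ C := by simpa [ctX] using hu
    simpa [ctX] using ⟨v, hv, rfl⟩

/-- A closed set `D` has at least the size of `X(C)` for `C = {v : ℓ_v ∈ D}`: it contains `X(C)`, except
possibly for the root, which has size `0`. -/
lemma le_sum_ctSize {V : Type*} {m : ℕ} (P : V → Fin m) (w : V → ℕ) (k : ℕ)
    (D : Finset (CTVert V m)) (hD : ∀ u ∈ D, ∀ z : CTVert V m, ctEdge P z u → z ∈ D) :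
    ((eraseNone D).toRight.image P).card * (2 * k) + ∑ v ∈ (eraseNone D).toRight, w v
      ≤ ∑ u ∈ D, ctSize w k u := by
  set C := (eraseNone D).toRight with hC
  calc ((C.image P).card * (2 * k) + ∑ v ∈ C, w v)
      = ∑ u ∈ ((C.image P).disjSum C).map Function.Embedding.some, ctSize w k u := by
        simp [Finset.sum_disjSum, ctSize]
    _ ≤ ∑ u ∈ D, ctSize w k u := by
        refine Finset.sum_le_sum_of_subset ?_
        intro u hu
        obtain ⟨x, hx, rfl⟩ := Finset.mem_map.1 hu
        rcases x with i | v
        · obtain ⟨v, hv, rfl⟩ : ∃ v ∈ C, P v = i := by simpa using hx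
          exact hD (some (Sum.inr v)) (by simpa [hC] using hv) _ (Or.inr ⟨v, rfl, rfl⟩)
        · simpa [hC] using hx

/-- assume `k ≥ 1`.  For every `q`, the vertex set `V` can be covered
by `q` BPCC configurations iff the whole vertex set of the reduced out-tree `H`
can be covered by `q` CT configurations. -/
theorem stmt_2 {V : Type*} [Fintype V] [DecidableEq V] [Nonempty V] {m : ℕ}
    (P : V → Fin m) (hP : Function.Surjective P)
    (Adj : V → V → Prop) (hAdj : ∀ u v : V, Adj u v ↔ P u ≠ P v)
    (w : V → ℕ) (k : ℕ) (hk : 1 ≤ k) (q : ℕ) :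
    (∃ Cs : Fin q → Finset V,
        (∀ j : Fin q, (∀ u ∈ Cs j, ∀ v ∈ Cs j, ¬ Adj u v) ∧ ∑ v ∈ Cs j, w v ≤ k) ∧
        ∀ v : V, ∃ j : Fin q, v ∈ Cs j) ↔
    (∃ Ds : Fin q → Finset (CTVert V m),
        (∀ j : Fin q,
            (∀ u ∈ Ds j, ∀ z : CTVert V m, ctEdge P z u → z ∈ Ds j) ∧
            ∑ u ∈ Ds j, ctSize w k u ≤ 3 * k) ∧
        ∀ x : CTVert V m, ∃ j : Fin q, x ∈ Ds j) := by
  constructor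
  · rintro ⟨Cs, hCs, hcov⟩
    refine ⟨fun j => ctX P (Cs j), fun j => ⟨ctX_closed P _, ?_⟩, ?_⟩
    · obtain ⟨hind, hw⟩ := hCs j
      have hcard : ((Cs j).image P).card ≤ 1 := by
        refine Finset.card_le_one.2 fun a ha b hb => ?_
        obtain ⟨u, hu, rfl⟩ := Finset.mem_image.1 ha
        obtain ⟨v, hv, rfl⟩ := Finset.mem_image.1 hb
        by_contra h
        exact hind u hu v hv ((hAdj u v).2 h)
      rw [sum_ctSize_ctX]
      nlinarith
    · rintro (_ | i | v)
      · obtain ⟨j, -⟩ := hcov (Classical.arbitrary V)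
        exact ⟨j, by simp [ctX]⟩
      · obtain ⟨v, rfl⟩ := hP i
        obtain ⟨j, hj⟩ := hcov v
        exact ⟨j, by simpa [ctX] using ⟨v, hj, rfl⟩⟩
      · obtain ⟨j, hj⟩ := hcov v
        exact ⟨j, by simpa [ctX] using hj⟩
  · rintro ⟨Ds, hDs, hcov⟩
    refine ⟨fun j => (eraseNone (Ds j)).toRight, fun j => ?_, fun v => ?_⟩
    · have hle := (le_sum_ctSize P w k (Ds j) (hDs j).1).trans (hDs j).2
      refine ⟨fun u hu v hv huv => ?_, ?_⟩
      · have hcard : 1 < ((eraseNone (Ds j)).toRight.image P).card :=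
          Finset.one_lt_card.2 ⟨P u, Finset.mem_image_of_mem P hu, P v,
            Finset.mem_image_of_mem P hv, (hAdj u v).1 huv⟩
        have hmul := Nat.mul_le_mul_right (2 * k) (Nat.succ_le_of_lt hcard)
        have hsum := Nat.le_of_add_right_le hle
        omega
      · rcases (eraseNone (Ds j)).toRight.eq_empty_or_nonempty with h | h
        · simp [h]
        · have hcard := (h.image P).card_pos
          nlinarith
    · obtain ⟨j, hj⟩ := hcov (some (Sum.inr v))
      exact ⟨j, by simpa using hj⟩
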